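/- arXiv:2302.01422 — 5 statements merged into one kernel-verified Lean document; each statement's English description precedes it below -/
import Mathlib

section
/- Let A and B be finite-dimensional nilpotent associative algebras over ℂ. Then dim M(A ⊕ B) = dim M(A) + dim M(B) + 2·dim(A/A')·dim(B/B'), where A ⊕ B denotes the direct sum of algebras. -/
/-!
Write an element of `A × B` as `(a, b)`. A bilinear form on `A × B` is a `2 × 2` block matrix
of forms on `A × A`, `B × B`, `A × B`, `B × A`. The cocycle identity says that the diagonal
blocks are cocycles; for the block `f : A × B → ℂ` it gives
`f (a₁ a₂, b) = f (a₁, a₂ b) = 0`, because mixed products vanish, and similarly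
`f (a, b₁ b₂) = 0`. So the off-diagonal blocks are precisely the bilinear forms on
`A ⧸ A' × B ⧸ B'` and on `B ⧸ B' × A ⧸ A'`. A coboundary has zero off-diagonal blocks and
coboundaries as diagonal blocks. Hence the injective map `blockForm` carries
`Z²(A) × Z²(B) × (off-diagonal forms)` onto `Z²(A × B)` and `B²(A) × B²(B) × 0` onto
`B²(A × B)` (`cocycles_prod`, `coboundaries_prod`), and counting dimensions gives the formula.
-/

open Module

noncomputable section Defs

variable (A : Type*) [NonUnitalRing A] [Module ℂ A]

/-- `A` is nilpotent: there is an `n` such that every product of `n` elements of `A`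
is zero (by associativity it suffices to consider left-normed products). -/
def IsNilpotentAlgebra : Prop :=
  ∃ n : ℕ, ∀ (x : A) (l : List A), l.length + 1 = n → l.foldl (· * ·) x = 0

/-- The derived ideal `A' = AA`: the linear span of all products in `A`. -/
def derivedIdeal : Submodule ℂ A :=
  Submodule.span ℂ {a : A | ∃ x y : A, x * y = a}

/-- The space of 2-cocycles: bilinear maps `f : A × A → ℂ` with `f(xy,z) = f(x,yz)`. -/
def Cocycles : Submodule ℂ (A →ₗ[ℂ] A →ₗ[ℂ] ℂ) where
  carrier := {f | ∀ x y z : A, f (x * y) z = f x (y * z)}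
  add_mem' := by
    intro f g hf hg x y z
    simp [hf x y z, hg x y z]
  zero_mem' := by
    intro x y z
    simp
  smul_mem' := by
    intro c f hf x y z
    simp [hf x y z]

/-- The space of 2-coboundaries: bilinear maps of the form `f(x,y) = g(xy)`. -/
def Coboundaries : Submodule ℂ (A →ₗ[ℂ] A →ₗ[ℂ] ℂ) where
  carrier := {f | ∃ g : A →ₗ[ℂ] ℂ, ∀ x y : A, f x y = g (x * y)}
  add_mem' := by
    rintro f₁ f₂ ⟨g₁, h₁⟩ ⟨g₂, h₂⟩
    exact ⟨g₁ + g₂, fun x y => by simp [h₁ x y, h₂ x y]⟩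
  zero_mem' := ⟨0, by simp⟩
  smul_mem' := by
    rintro c f ⟨g, h⟩
    exact ⟨c • g, fun x y => by simp [h x y]⟩

/-- The dimension of the multiplier `M(A) = H²(A, ℂ)`, the quotient of the cocycles
by the coboundaries. -/
def multDim : ℕ :=
  Module.finrank ℂ ((Cocycles A).map (Coboundaries A).mkQ)

/-- `t(A) = (dim A)² - dim M(A)`. -/
def tInv : ℤ :=
  (Module.finrank ℂ A : ℤ) ^ 2 - (multDim A : ℤ)

/-- A (two-sided) ideal of `A`. -/
def IsIdealOf (I : Submodule ℂ A) : Prop :=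
  ∀ a : A, ∀ x ∈ I, a * x ∈ I ∧ x * a ∈ I

/-- `A ≅ J₁ ⊕ A(k)`: `A` has a basis `x, z, a₁, …, a_k` whose only nonzero
product of basis vectors is `x·x = z`. -/
def IsJ1SumAbelian (k : ℕ) : Prop :=
  ∃ b : Basis (Fin (k + 2)) ℂ A,
    b 0 * b 0 = b 1 ∧ ∀ i j : Fin (k + 2), ¬(i = 0 ∧ j = 0) → b i * b j = 0

/-- `A ≅ J₁`: `A` has a basis `x, z` with only nonzero product `x·x = z`. -/
def IsJ1 : Prop := IsJ1SumAbelian A 0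

/-- `A ≅ C₃`: `A` has a basis `x, z, z'` with only nonzero products
`x·x = z`, `x·z = z·x = z'`. -/
def IsC3 : Prop :=
  ∃ b : Basis (Fin 3) ℂ A,
    b 0 * b 0 = b 1 ∧ b 0 * b 1 = b 2 ∧ b 1 * b 0 = b 2 ∧
    b 0 * b 2 = 0 ∧ b 2 * b 0 = 0 ∧ b 1 * b 1 = 0 ∧ b 1 * b 2 = 0 ∧
    b 2 * b 1 = 0 ∧ b 2 * b 2 = 0

variable [SMulCommClass ℂ A A] [IsScalarTower ℂ A A]

/-- The center `Z(A) = {z : za = az = 0 for all a}`. -/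
def centerSub : Submodule ℂ A where
  carrier := {z | ∀ a : A, z * a = 0 ∧ a * z = 0}
  add_mem' := by
    intro x y hx hy a
    constructor
    · rw [add_mul, (hx a).1, (hy a).1, add_zero]
    · rw [mul_add, (hx a).2, (hy a).2, add_zero]
  zero_mem' := by
    intro a
    simp
  smul_mem' := by
    intro c x hx a
    constructor
    · rw [smul_mul_assoc, (hx a).1, smul_zero]
    · rw [mul_smul_comm, (hx a).2, smul_zero]

/-- `A` is extra special: `Z(A) = A'` and `dim Z(A) = 1`. -/
def IsExtraSpecialAlg : Prop :=
  centerSub A = derivedIdeal A ∧ Module.finrank ℂ (centerSub A) = 1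

/-- `A ≅ E ⊕ A(k)` for some extra special algebra `E` of dimension `n`:
`A` decomposes as an internal direct sum of a subalgebra `E` which is extra special
of dimension `n` and a central subspace `Z` of dimension `k` all of whose products
with `A` vanish. -/
def HasExtraSpecialDecomp (n k : ℕ) : Prop :=
  ∃ (E : NonUnitalSubalgebra ℂ A) (Z : Submodule ℂ A),
    IsCompl E.toSubmodule Z ∧ (∀ z ∈ Z, ∀ a : A, z * a = 0 ∧ a * z = 0) ∧
    IsExtraSpecialAlg ↥E ∧ Module.finrank ℂ ↥E = n ∧ Module.finrank ℂ ↥Z = k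

end Defs

section BlockForms

variable (A B : Type*) [NonUnitalRing A] [Module ℂ A] [NonUnitalRing B] [Module ℂ B]

lemma coboundaries_le_cocycles : Coboundaries A ≤ Cocycles A := by
  rintro f ⟨g, hg⟩ x y z
  rw [hg, hg, mul_assoc]

lemma finrank_map_mkQ_add {V : Type*} [AddCommGroup V] [Module ℂ V] [FiniteDimensional ℂ V]
    (p q : Submodule ℂ V) (hpq : p ≤ q) :
    finrank ℂ (q.map p.mkQ) + finrank ℂ p = finrank ℂ q := by
  have h := LinearMap.finrank_range_add_finrank_ker (p.mkQ.domRestrict q)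
  rwa [LinearMap.range_domRestrict, LinearMap.ker_domRestrict, Submodule.ker_mkQ,
    (Submodule.comapSubtypeEquivOfLe hpq).finrank_eq] at h

lemma multDim_add_finrank_coboundaries [FiniteDimensional ℂ A] :
    multDim A + finrank ℂ (Coboundaries A) = finrank ℂ (Cocycles A) :=
  finrank_map_mkQ_add _ _ (coboundaries_le_cocycles A)

/-- The pullback along the quotient maps of a bilinear form on `A ⧸ A' × B ⧸ B'`. -/
def pullForm : ((A ⧸ derivedIdeal A) →ₗ[ℂ] (B ⧸ derivedIdeal B) →ₗ[ℂ] ℂ) →ₗ[ℂ]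
    (A →ₗ[ℂ] B →ₗ[ℂ] ℂ) where
  toFun f := f.compl₁₂ (derivedIdeal A).mkQ (derivedIdeal B).mkQ
  map_add' f g := by ext; simp
  map_smul' c f := by ext; simp

/-- The bilinear form on `A × B` with the given diagonal blocks and with off-diagonal blocks
pulled back from the quotients by the derived ideals. -/
def blockForm : ((A →ₗ[ℂ] A →ₗ[ℂ] ℂ) × (B →ₗ[ℂ] B →ₗ[ℂ] ℂ)) ×
      (((A ⧸ derivedIdeal A) →ₗ[ℂ] (B ⧸ derivedIdeal B) →ₗ[ℂ] ℂ) ×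
        ((B ⧸ derivedIdeal B) →ₗ[ℂ] (A ⧸ derivedIdeal A) →ₗ[ℂ] ℂ)) →ₗ[ℂ]
    (A × B →ₗ[ℂ] A × B →ₗ[ℂ] ℂ) where
  toFun p := p.1.1.compl₁₂ (LinearMap.fst ℂ A B) (LinearMap.fst ℂ A B) +
    p.1.2.compl₁₂ (LinearMap.snd ℂ A B) (LinearMap.snd ℂ A B) +
    (pullForm A B p.2.1).compl₁₂ (LinearMap.fst ℂ A B) (LinearMap.snd ℂ A B) +
    (pullForm B A p.2.2).compl₁₂ (LinearMap.snd ℂ A B) (LinearMap.fst ℂ A B)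
  map_add' p q := by
    refine LinearMap.ext₂ fun x y => ?_
    simp
    ring
  map_smul' c p := by
    refine LinearMap.ext₂ fun x y => ?_
    simp

variable {A B}

lemma blockForm_apply (p) (x y : A × B) : blockForm A B p x y =
    p.1.1 x.1 y.1 + p.1.2 x.2 y.2 +
      p.2.1 ((derivedIdeal A).mkQ x.1) ((derivedIdeal B).mkQ y.2) +
      p.2.2 ((derivedIdeal B).mkQ x.2) ((derivedIdeal A).mkQ y.1) := rfl

lemma mkQ_mul (x y : A) : (derivedIdeal A).mkQ (x * y) = 0 := by
  rw [Submodule.mkQ_apply, Submodule.Quotient.mk_eq_zero]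
  exact Submodule.subset_span ⟨x, y, rfl⟩

lemma blockForm_injective : Function.Injective (blockForm A B) := by
  rw [← LinearMap.ker_eq_bot, LinearMap.ker_eq_bot']
  rintro ⟨⟨f, g⟩, h, k⟩ h0
  have H (x y : A × B) := (blockForm_apply _ x y).symm.trans (LinearMap.congr_fun₂ h0 x y)
  refine Prod.ext (Prod.ext ?_ ?_) (Prod.ext ?_ ?_)
  · refine LinearMap.ext₂ fun x y => ?_
    simpa using H (x, 0) (y, 0)
  · refine LinearMap.ext₂ fun x y => ?_
    simpa using H (0, x) (0, y)
  · refine LinearMap.ext₂ fun x y => ?_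
    obtain ⟨x, rfl⟩ := (derivedIdeal A).mkQ_surjective x
    obtain ⟨y, rfl⟩ := (derivedIdeal B).mkQ_surjective y
    simpa using H (x, 0) (0, y)
  · refine LinearMap.ext₂ fun x y => ?_
    obtain ⟨x, rfl⟩ := (derivedIdeal B).mkQ_surjective x
    obtain ⟨y, rfl⟩ := (derivedIdeal A).mkQ_surjective y
    simpa using H (0, x) (y, 0)

/-- A bilinear form descends to the quotients by the derived ideals as soon as it vanishes on
products in either variable. -/
lemma exists_pullForm (f : A →ₗ[ℂ] B →ₗ[ℂ] ℂ) (h₁ : ∀ x y b, f (x * y) b = 0)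
    (h₂ : ∀ a x y, f a (x * y) = 0) : ∃ g, pullForm A B g = f := by
  have k₁ : derivedIdeal A ≤ LinearMap.ker f := by
    refine Submodule.span_le.2 ?_
    rintro _ ⟨x, y, rfl⟩
    exact LinearMap.ext fun b => h₁ x y b
  have k₂ : derivedIdeal B ≤ LinearMap.ker ((derivedIdeal A).liftQ f k₁).flip := by
    refine Submodule.span_le.2 ?_
    rintro _ ⟨x, y, rfl⟩
    refine LinearMap.ext fun a => ?_
    obtain ⟨a, rfl⟩ := (derivedIdeal A).mkQ_surjective a
    exact h₂ a x y
  refine ⟨((derivedIdeal B).liftQ _ k₂).flip, ?_⟩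
  refine LinearMap.ext₂ fun x y => ?_
  simp [pullForm]

lemma cocycles_prod : Cocycles (A × B) =
    (((Cocycles A).prod (Cocycles B)).prod ⊤).map (blockForm A B) := by
  apply le_antisymm
  · intro F hF
    have hF' : ∀ x y z : A × B, F (x * y) z = F x (y * z) := hF
    have hl : ∀ x, F x ((0 : A), (0 : B)) = 0 := fun x => map_zero (F x)
    have hr : ∀ y, F ((0 : A), (0 : B)) y = 0 := fun y => LinearMap.map_zero₂ F y
    obtain ⟨h, hh⟩ := exists_pullForm
      (F.compl₁₂ (LinearMap.inl ℂ A B) (LinearMap.inr ℂ A B))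
      (fun x y b => by simpa [hl] using hF' (x, 0) (y, 0) (0, b))
      (fun a x y => by simpa [hr] using (hF' (a, 0) (0, x) (0, y)).symm)
    obtain ⟨k, hk⟩ := exists_pullForm
      (F.compl₁₂ (LinearMap.inr ℂ A B) (LinearMap.inl ℂ A B))
      (fun x y b => by simpa [hl] using hF' (0, x) (0, y) (b, 0))
      (fun a x y => by simpa [hr] using (hF' (0, a) (x, 0) (y, 0)).symm)
    refine ⟨((F.compl₁₂ (LinearMap.inl ℂ A B) (LinearMap.inl ℂ A B),
      F.compl₁₂ (LinearMap.inr ℂ A B) (LinearMap.inr ℂ A B)), h, k),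
      ⟨⟨?_, ?_⟩, trivial⟩, ?_⟩
    · intro x y z
      simpa using hF' (x, 0) (y, 0) (z, 0)
    · intro x y z
      simpa using hF' (0, x) (0, y) (0, z)
    · refine LinearMap.ext₂ fun x y => ?_
      have e₁ := LinearMap.congr_fun₂ hh x.1 y.2
      have e₂ := LinearMap.congr_fun₂ hk x.2 y.1
      change h ((derivedIdeal A).mkQ x.1) ((derivedIdeal B).mkQ y.2) = F (x.1, 0) (0, y.2) at e₁
      change k ((derivedIdeal B).mkQ x.2) ((derivedIdeal A).mkQ y.1) = F (0, x.2) (y.1, 0) at e₂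
      rw [blockForm_apply, e₁, e₂]
      have hx : x = (x.1, 0) + (0, x.2) := by simp
      have hy : y = (y.1, 0) + (0, y.2) := by simp
      conv_rhs => rw [hx, hy]
      simp only [map_add, LinearMap.add_apply, LinearMap.compl₁₂_apply, LinearMap.inl_apply,
        LinearMap.inr_apply]
      ring
  · rintro _ ⟨⟨⟨f, g⟩, h, k⟩, ⟨⟨hf, hg⟩, -⟩, rfl⟩ x y z
    have hf' := hf x.1 y.1 z.1
    have hg' := hg x.2 y.2 z.2
    simp only [blockForm_apply, Prod.fst_mul, Prod.snd_mul, mkQ_mul, map_zero,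
      LinearMap.zero_apply] at hf' hg' ⊢
    rw [hf', hg']

lemma coboundaries_prod : Coboundaries (A × B) =
    (((Coboundaries A).prod (Coboundaries B)).prod ⊥).map (blockForm A B) := by
  apply le_antisymm
  · rintro F ⟨G, hG⟩
    refine ⟨((F.compl₁₂ (LinearMap.inl ℂ A B) (LinearMap.inl ℂ A B),
      F.compl₁₂ (LinearMap.inr ℂ A B) (LinearMap.inr ℂ A B)), 0),
      ⟨⟨⟨G.comp (LinearMap.inl ℂ A B), ?_⟩, ⟨G.comp (LinearMap.inr ℂ A B), ?_⟩⟩, rfl⟩, ?_⟩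
    · intro x y
      simp [hG]
    · intro x y
      simp [hG]
    · refine LinearMap.ext₂ fun x y => ?_
      simp [blockForm_apply, hG, ← map_add]
      rfl
  · rintro _ ⟨⟨⟨f, g⟩, p⟩, ⟨⟨⟨u, hu⟩, ⟨v, hv⟩⟩, hp⟩, rfl⟩
    obtain rfl : p = 0 := hp
    refine ⟨u.coprod v, fun x y => ?_⟩
    simp_all [blockForm_apply]

lemma finrank_submodule_prod {V W : Type*} [AddCommGroup V] [Module ℂ V] [AddCommGroup W]
    [Module ℂ W] [FiniteDimensional ℂ V] [FiniteDimensional ℂ W]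
    (p : Submodule ℂ V) (q : Submodule ℂ W) :
    finrank ℂ (p.prod q) = finrank ℂ p + finrank ℂ q := by
  have h := LinearMap.finrank_range_of_inj (f := p.subtype.prodMap q.subtype)
    (p.subtype_injective.prodMap q.subtype_injective)
  rwa [LinearMap.range_prodMap, p.range_subtype, q.range_subtype, finrank_prod] at h

end BlockForms

/-- Künneth-Loday style formula: for finite-dimensional nilpotent associative
ℂ-algebras `A` and `B`,
`dim M(A ⊕ B) = dim M(A) + dim M(B) + 2 · dim(A/A') · dim(B/B')`. -/
theorem multDim_prod (A B : Type*) [NonUnitalRing A] [Module ℂ A] [SMulCommClass ℂ A A] [IsScalarTower ℂ A A]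
    [NonUnitalRing B] [Module ℂ B] [SMulCommClass ℂ B B] [IsScalarTower ℂ B B]
    [FiniteDimensional ℂ A] [FiniteDimensional ℂ B]
    (hA : IsNilpotentAlgebra A) (hB : IsNilpotentAlgebra B) :
    multDim (A × B) =
      multDim A + multDim B +
        2 * (Module.finrank ℂ (A ⧸ derivedIdeal A) *
          Module.finrank ℂ (B ⧸ derivedIdeal B)) := by
  have hAB := multDim_add_finrank_coboundaries (A × B)
  have hA' := multDim_add_finrank_coboundaries A
  have hB' := multDim_add_finrank_coboundaries B
  rw [cocycles_prod, coboundaries_prod,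
    ← (Submodule.equivMapOfInjective _ blockForm_injective _).finrank_eq,
    ← (Submodule.equivMapOfInjective _ blockForm_injective _).finrank_eq,
    finrank_submodule_prod, finrank_submodule_prod, finrank_submodule_prod,
    finrank_submodule_prod, finrank_bot, finrank_top, finrank_prod] at hAB
  simp only [finrank_linearMap, finrank_self, mul_one] at hAB
  rw [mul_comm (finrank ℂ (B ⧸ derivedIdeal B))] at hAB
  omega
end

section
/- Let A be a finite-dimensional nilpotent associative algebra over ℂ. Then t(A) = 0 if and only if A is abelian (all products in A are zero). -/
/-!
Write `n = dim A`. The space of all bilinear forms on `A` has dimension `n²`, and `M(A)` is a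
subspace of its quotient by the coboundaries, so `dim M(A) ≤ n² - dim Coboundaries`. Hence
`t(A) = 0` forces the coboundaries to vanish. Since linear functionals separate the points of `A`,
the coboundaries `(x, y) ↦ g (x * y)` all vanish exactly when every product is zero. Conversely,
when every product is zero each bilinear form is a cocycle and the only coboundary is `0`, so
`dim M(A) = n²`.
-/

open Module

theorem finrank_bilinForms (A : Type*) [NonUnitalRing A] [Module ℂ A] [FiniteDimensional ℂ A] :
    Module.finrank ℂ (A →ₗ[ℂ] A →ₗ[ℂ] ℂ) = Module.finrank ℂ A ^ 2 := by
  rw [Module.finrank_linearMap, Module.finrank_linearMap, Module.finrank_self, mul_one, sq]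

theorem coboundaries_eq_bot_iff (A : Type*) [NonUnitalRing A] [Module ℂ A] [SMulCommClass ℂ A A]
    [IsScalarTower ℂ A A] :
    Coboundaries A = ⊥ ↔ ∀ x y : A, x * y = 0 := by
  constructor
  · intro h x y
    rw [← Module.forall_dual_apply_eq_zero_iff ℂ]
    intro g
    have hg : (LinearMap.mul ℂ A).compr₂ g ∈ Coboundaries A := ⟨g, fun x y => by simp⟩
    rw [h, Submodule.mem_bot] at hg
    simpa using LinearMap.congr_fun₂ hg x y
  · intro h
    rw [eq_bot_iff]
    rintro f ⟨g, hg⟩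
    rw [Submodule.mem_bot]
    ext x y
    simp [hg, h]

/-- For a finite-dimensional nilpotent associative ℂ-algebra `A`,
`t(A) = 0` iff `A` is abelian. -/
theorem tInv_eq_zero_iff (A : Type*) [NonUnitalRing A] [Module ℂ A] [SMulCommClass ℂ A A] [IsScalarTower ℂ A A]
    [FiniteDimensional ℂ A] (hnil : IsNilpotentAlgebra A) :
    tInv A = 0 ↔ ∀ x y : A, x * y = 0 := by
  have hq := (Coboundaries A).finrank_quotient_add_finrank
  rw [finrank_bilinForms] at hq
  constructor
  · intro h
    rw [← coboundaries_eq_bot_iff, ← Submodule.finrank_eq_zero (R := ℂ)]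
    have hle : multDim A ≤ _ := ((Cocycles A).map (Coboundaries A).mkQ).finrank_le
    have hm : Module.finrank ℂ A ^ 2 = multDim A := by
      unfold tInv at h
      exact_mod_cast sub_eq_zero.mp h
    omega
  · intro h
    have hcoc : Cocycles A = ⊤ := by
      rw [eq_top_iff]
      intro f _ x y z
      simp [h]
    have hm : multDim A = Module.finrank ℂ A ^ 2 := by
      rw [(coboundaries_eq_bot_iff A).2 h, finrank_bot, add_zero] at hq
      rw [multDim, hcoc, Submodule.map_top, Submodule.range_mkQ, finrank_top,
        (coboundaries_eq_bot_iff A).2 h, hq]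
    rw [tInv, hm]
    push_cast
    ring
end

section
/- Let C₃ be the 3-dimensional associative algebra over ℂ with basis {x, z, z'} and only nonzero products xx = z and xz = zx = z'. Then dim M(C₃) = 1, and consequently t(C₃) = 8. -/
/-!
`C₃` is the algebra `t ℂ[t] / (t⁴)`, with `x = t`, `z = t²`, `z' = t³`. A cocycle `f` has
`f(tⁱ, tʲ)` depending only on `i + j`, and vanishing for `i + j ≥ 5`; so it is determined by
its values in degrees `2`, `3` and `4`. Since `t² ≠ 0`, `t³ ≠ 0` and `t⁴ = 0`, coboundaries are
exactly the cocycles whose degree-`4` value `f(t, t³)` is zero. Hence the class of the cocycle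
`c3Cocycle`, which pairs `tⁱ` with `t⁴⁻ⁱ`, spans the multiplier.
-/

open Module

/-- The bilinear form with value `1` on `(x, z')`, `(z, z)`, `(z', x)` and `0` on all other pairs
of basis vectors. -/
noncomputable def c3Cocycle {C : Type*} [NonUnitalRing C] [Module ℂ C] (b : Basis (Fin 3) ℂ C) :
    C →ₗ[ℂ] C →ₗ[ℂ] ℂ :=
  b.constr ℂ ![b.coord 2, b.coord 1, b.coord 0]

lemma c3_coords {C : Type*} [NonUnitalRing C] [Module ℂ C] (b : Basis (Fin 3) ℂ C) (x : C) :
    ∃ p q r : ℂ, x = p • b 0 + q • b 1 + r • b 2 :=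
  ⟨b.repr x 0, b.repr x 1, b.repr x 2, by
    conv_lhs => rw [← b.sum_repr x, Fin.sum_univ_three]⟩

/-- For the algebra `C₃` (basis `x, z, z'`, nonzero products `xx = z`, `xz = zx = z'`):
`dim M(C₃) = 1` and consequently `t(C₃) = 8`. -/
theorem multDim_C3 (C : Type*) [NonUnitalRing C] [Module ℂ C] [SMulCommClass ℂ C C] [IsScalarTower ℂ C C]
    (h : IsC3 C) :
    multDim C = 1 ∧ tInv C = 8 := by
  obtain ⟨b, h00, h01, h10, h02, h20, h11, h12, h21, h22⟩ := h
  have k0 : c3Cocycle b (b 0) = b.coord 2 := by simp [c3Cocycle]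
  have k1 : c3Cocycle b (b 1) = b.coord 1 := by simp [c3Cocycle]
  have k2 : c3Cocycle b (b 2) = b.coord 0 := by simp [c3Cocycle]
  have hcoc : c3Cocycle b ∈ Cocycles C := by
    intro x y z
    obtain ⟨x0, x1, x2, rfl⟩ := c3_coords b x
    obtain ⟨y0, y1, y2, rfl⟩ := c3_coords b y
    obtain ⟨z0, z1, z2, rfl⟩ := c3_coords b z
    simp [mul_add, add_mul, smul_mul_assoc, mul_smul_comm, h00, h01, h10, h02, h20, h11, h12,
      h21, h22, k0, k1, k2]
    ring
  have hncob : c3Cocycle b ∉ Coboundaries C := by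
    rintro ⟨g, hg⟩
    have := hg (b 0) (b 2)
    simp [k0, h02] at this
  have hM : multDim C = 1 := by
    refine (finrank_eq_one_iff_of_nonzero'
      (⟨(Coboundaries C).mkQ (c3Cocycle b), Submodule.mem_map_of_mem hcoc⟩ :
        (Cocycles C).map (Coboundaries C).mkQ) ?_).2 ?_
    · intro h0
      exact hncob ((Submodule.Quotient.mk_eq_zero _).1 (congrArg Subtype.val h0))
    · rintro ⟨_, f, hf, rfl⟩
      refine ⟨f (b 0) (b 2), Subtype.ext ?_⟩
      change (Coboundaries C).mkQ (f (b 0) (b 2) • c3Cocycle b) = (Coboundaries C).mkQ f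
      symm
      obtain ⟨g, g1, g2⟩ : ∃ g : C →ₗ[ℂ] ℂ, g (b 1) = f (b 0) (b 0) ∧ g (b 2) = f (b 0) (b 1) :=
        ⟨b.constr ℂ ![0, f (b 0) (b 0), f (b 0) (b 1)], b.constr_basis ℂ _ 1,
          b.constr_basis ℂ _ 2⟩
      refine (Submodule.Quotient.eq _).2 ⟨g, fun x y => ?_⟩
      have hf' : ∀ x y z : C, f (x * y) z = f x (y * z) := hf
      -- A cocycle is constant on pairs of equal degree and vanishes in degree 5 and above.
      have f10 : f (b 1) (b 0) = f (b 0) (b 1) := by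
        simpa [h00] using hf' (b 0) (b 0) (b 0)
      have f11 : f (b 1) (b 1) = f (b 0) (b 2) := by
        simpa [h00, h01] using hf' (b 0) (b 0) (b 1)
      have f20 : f (b 2) (b 0) = f (b 0) (b 2) := by
        rw [← f11]; simpa [h00, h10] using hf' (b 1) (b 0) (b 0)
      have f12 : f (b 1) (b 2) = 0 := by
        simpa [h00, h02] using hf' (b 0) (b 0) (b 2)
      have f21 : f (b 2) (b 1) = 0 := by
        simpa [h01, h11] using hf' (b 0) (b 1) (b 1)
      have f22 : f (b 2) (b 2) = 0 := by
        simpa [h01, h12] using hf' (b 0) (b 1) (b 2)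
      obtain ⟨x0, x1, x2, rfl⟩ := c3_coords b x
      obtain ⟨y0, y1, y2, rfl⟩ := c3_coords b y
      simp [mul_add, add_mul, smul_mul_assoc, mul_smul_comm, h00, h01, h10, h02, h20, h11, h12,
        h21, h22, k0, k1, k2, f10, f11, f20, f12, f21, f22, g1, g2]
      ring
  refine ⟨hM, ?_⟩
  rw [tInv, hM, finrank_eq_card_basis b]
  norm_num
end

section
/- Let B be the 4-dimensional associative algebra over ℂ with basis {x, z, a, z'} and only nonzero products xx = z and ax = z'. Then dim M(B) = 4, and consequently t(B) = 12. -/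
/-! Write `x₀, …, x₃` for the coordinates of an element in the given basis. The product is
`x * y = (x₀ y₀) b₁ + (x₂ y₀) b₃`, so comparing both sides of the cocycle identity on basis
vectors shows that a bilinear `f`, with matrix `fᵢⱼ = f(bᵢ, bⱼ)`, is a cocycle iff
`f₀₁ = f₁₀`, `f₂₁ = f₃₀`, and all entries other than these and `f₀₀, f₀₂, f₂₀, f₂₂` vanish.
Coboundaries are the forms supported on the entries `f₀₀` and `f₂₀`. Hence the four forms
`E₀₁ + E₁₀`, `E₀₂`, `E₂₁ + E₃₀`, `E₂₂` (`multForms` below) are cocycles whose classes form a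
basis of `M(B)`: their linear combination map, followed by the quotient by the coboundaries, is
injective with range `M(B)`. -/

open Module

/-- The elementary bilinear form `(x, y) ↦ xᵢ yⱼ` attached to a basis. -/
noncomputable def elemForm {B : Type*} [NonUnitalRing B] [Module ℂ B]
    (b : Basis (Fin 4) ℂ B) (i j : Fin 4) : B →ₗ[ℂ] B →ₗ[ℂ] ℂ :=
  (LinearMap.mul ℂ ℂ).compl₁₂ (b.coord i) (b.coord j)

/-- Four cocycles whose classes form a basis of the multiplier. -/
noncomputable def multForms {B : Type*} [NonUnitalRing B] [Module ℂ B]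
    (b : Basis (Fin 4) ℂ B) : Fin 4 → (B →ₗ[ℂ] B →ₗ[ℂ] ℂ) :=
  ![elemForm b 0 1 + elemForm b 1 0, elemForm b 0 2,
    elemForm b 2 1 + elemForm b 3 0, elemForm b 2 2]

lemma linearCombination_multForms_apply {B : Type*} [NonUnitalRing B] [Module ℂ B]
    (b : Basis (Fin 4) ℂ B) (c : Fin 4 → ℂ) (x y : B) :
    Fintype.linearCombination ℂ (multForms b) c x y =
      c 0 * (b.repr x 0 * b.repr y 1 + b.repr x 1 * b.repr y 0) +
      c 1 * (b.repr x 0 * b.repr y 2) +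
      c 2 * (b.repr x 2 * b.repr y 1 + b.repr x 3 * b.repr y 0) +
      c 3 * (b.repr x 2 * b.repr y 2) := by
  simp [Fintype.linearCombination_apply, Fin.sum_univ_four, multForms, elemForm]
  ring

lemma mul_eq_of_basis {B : Type*} [NonUnitalRing B] [Module ℂ B]
    [SMulCommClass ℂ B B] [IsScalarTower ℂ B B] (b : Basis (Fin 4) ℂ B)
    (h00 : b 0 * b 0 = b 1) (h20 : b 2 * b 0 = b 3)
    (h : ∀ i j : Fin 4, ¬(i = 0 ∧ j = 0) → ¬(i = 2 ∧ j = 0) → b i * b j = 0) (x y : B) :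
    x * y = (b.repr x 0 * b.repr y 0) • b 1 + (b.repr x 2 * b.repr y 0) • b 3 := by
  have hr (i : Fin 4) (j : Fin 4) (hj : j ≠ 0) : b i * b j = 0 :=
    h i j (fun e => hj e.2) (fun e => hj e.2)
  have h10 : b 1 * b 0 = 0 := h 1 0 (by decide) (by decide)
  have h30 : b 3 * b 0 = 0 := h 3 0 (by decide) (by decide)
  conv_lhs => rw [← b.sum_repr x, ← b.sum_repr y]
  simp only [Fin.sum_univ_four, add_mul, mul_add, smul_mul_assoc, mul_smul_comm, h00, h20, h10,
    h30, hr _ 1 (by decide), hr _ 2 (by decide), hr _ 3 (by decide), smul_zero, add_zero]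
  module

/-- For the 4-dimensional algebra `B` with basis `x, z, a, z'` and only nonzero products
`x·x = z` and `a·x = z'` (below `b 0 = x`, `b 1 = z`, `b 2 = a`, `b 3 = z'`):
`dim M(B) = 4` and consequently `t(B) = 12`. -/
theorem multDim_example_dim_four (B : Type*) [NonUnitalRing B] [Module ℂ B] [SMulCommClass ℂ B B] [IsScalarTower ℂ B B]
    (h : ∃ b : Basis (Fin 4) ℂ B,
      b 0 * b 0 = b 1 ∧ b 2 * b 0 = b 3 ∧
      ∀ i j : Fin 4, ¬(i = 0 ∧ j = 0) → ¬(i = 2 ∧ j = 0) → b i * b j = 0) :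
    multDim B = 4 ∧ tInv B = 12 := by
  obtain ⟨b, h00, h20, h⟩ := h
  have hmul := mul_eq_of_basis b h00 h20 h
  have hz (i j : Fin 4) (hij : ¬(i = 0 ∧ j = 0) ∧ ¬(i = 2 ∧ j = 0)) : b i * b j = 0 :=
    h i j hij.1 hij.2
  have hφ := linearCombination_multForms_apply b
  set φ := Fintype.linearCombination ℂ (multForms b)
  have hcoc (c : Fin 4 → ℂ) : φ c ∈ Cocycles B := by
    intro x y z
    rw [hφ, hφ, hmul x y, hmul y z]
    simp
    ring
  have hinj : Function.Injective ((Coboundaries B).mkQ ∘ₗ φ) := by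
    rw [← LinearMap.ker_eq_bot, LinearMap.ker_eq_bot']
    intro c hc
    obtain ⟨g, hg⟩ := (Submodule.Quotient.mk_eq_zero _).1 hc
    have e0 := hg (b 0) (b 1)
    have e1 := hg (b 0) (b 2)
    have e2 := hg (b 2) (b 1)
    have e3 := hg (b 2) (b 2)
    rw [hφ, hz _ _ (by decide)] at e0 e1 e2 e3
    simp at e0 e1 e2 e3
    funext i
    fin_cases i <;> assumption
  have hrange : LinearMap.range ((Coboundaries B).mkQ ∘ₗ φ) =
      (Cocycles B).map (Coboundaries B).mkQ := by
    apply le_antisymm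
    · rintro _ ⟨c, rfl⟩
      exact ⟨φ c, hcoc c, rfl⟩
    · rintro _ ⟨f, hf, rfl⟩
      refine ⟨![f (b 0) (b 1), f (b 0) (b 2), f (b 2) (b 1), f (b 2) (b 2)], ?_⟩
      refine ((Submodule.Quotient.eq _).2 ?_).symm
      -- The entries `f₀₀` and `f₂₀` are accounted for by the coboundary of this functional.
      refine ⟨f (b 0) (b 0) • b.coord 1 + f (b 2) (b 0) • b.coord 3, fun x y => ?_⟩
      have f10 : f (b 1) (b 0) = f (b 0) (b 1) := by
        have := hf (b 0) (b 0) (b 0)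
        rwa [h00] at this
      have f30 : f (b 3) (b 0) = f (b 2) (b 1) := by
        have := hf (b 2) (b 0) (b 0)
        rwa [h00, h20] at this
      have f1 (k : Fin 4) (hk : k ≠ 0) : f (b 1) (b k) = 0 := by
        have := hf (b 0) (b 0) (b k)
        rwa [h00, hz 0 k (by simp [hk]), map_zero] at this
      have f3 (k : Fin 4) (hk : k ≠ 0) : f (b 3) (b k) = 0 := by
        have := hf (b 2) (b 0) (b k)
        rwa [h20, hz 0 k (by simp [hk]), map_zero] at this
      have fr3 (i : Fin 4) : f (b i) (b 3) = 0 := by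
        have := hf (b i) (b 2) (b 0)
        rw [h20, hz i 2 (by simp), map_zero] at this
        simpa using this.symm
      rw [LinearMap.sub_apply, LinearMap.sub_apply, hφ, hmul,
        ← LinearMap.sum_repr_mul_repr_mul b b x y]
      simp [Finsupp.sum_fintype, Fin.sum_univ_four, f10, f30, f1, f3, fr3]
      ring
  have hM : multDim B = 4 := by
    rw [multDim, ← hrange, LinearMap.finrank_range_of_inj hinj, Module.finrank_fin_fun]
  refine ⟨hM, ?_⟩
  rw [tInv, hM, Module.finrank_eq_card_basis b]
  norm_num
end

section
/- Let B be the 4-dimensional associative algebra over ℂ with basis {x, y, z, z'} and only nonzero products xx = z', xy = z, and yx = z'. Then t(B) = 13, i.e., dim M(B) = 3. -/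
/-!
Write `fᵢⱼ = f (b i) (b j)`. Evaluating the cocycle identity on triples of basis vectors leaves
`f₀₀, f₀₁, f₁₀, f₁₁` free, forces `f₀₂ = f₁₂ = f₃₁`, and kills all other values. A coboundary
`f(x,y) = g(xy)` is recovered from `g (b 2) = f₀₁` and `g (b 3) = f₀₀ = f₁₀`. Hence
`f ↦ (f₀₀ - f₁₀, f₁₁, f₃₁)` vanishes on coboundaries and induces an isomorphism from the image
of the cocycles in the quotient, i.e. from `M(B)`, onto `ℂ³`.
-/

open Module

noncomputable section Example

variable {B : Type*} [NonUnitalRing B] [Module ℂ B]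

/-- The linear map `f ↦ (f₀₀ - f₁₀, f₁₁, f₃₁)`; on cocycles it is a complete set of invariants
modulo coboundaries. -/
def cocycleInvariants (b : Basis (Fin 4) ℂ B) : (B →ₗ[ℂ] B →ₗ[ℂ] ℂ) →ₗ[ℂ] (Fin 3 → ℂ) where
  toFun f := ![f (b 0) (b 0) - f (b 1) (b 0), f (b 1) (b 1), f (b 3) (b 1)]
  map_add' f g := by
    ext i; fin_cases i <;> (simp; try ring)
  map_smul' c f := by
    ext i; fin_cases i <;> (simp; try ring)

/-- The bilinear form `u₀v₀ t₀ + u₁v₁ t₁ + (u₃v₁ + u₀v₂ + u₁v₂) t₂`, a cocycle whose invariants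
are `t`. -/
def cocycleOfInvariants (b : Basis (Fin 4) ℂ B) (t : Fin 3 → ℂ) : B →ₗ[ℂ] B →ₗ[ℂ] ℂ :=
  LinearMap.mk₂ ℂ
    (fun u v => t 0 * (b.repr u 0 * b.repr v 0) + t 1 * (b.repr u 1 * b.repr v 1)
      + t 2 * (b.repr u 3 * b.repr v 1 + b.repr u 0 * b.repr v 2 + b.repr u 1 * b.repr v 2))
    (by intros; simp; ring) (by intros; simp; ring)
    (by intros; simp; ring) (by intros; simp; ring)

lemma cocycleInvariants_cocycleOfInvariants (b : Basis (Fin 4) ℂ B) (t : Fin 3 → ℂ) :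
    cocycleInvariants b (cocycleOfInvariants b t) = t := by
  ext i
  fin_cases i <;>
    simp [cocycleInvariants, cocycleOfInvariants]

lemma cocycleOfInvariants_mem (b : Basis (Fin 4) ℂ B)
    (hm : ∀ u v : B, u * v = (b.repr u 0 * b.repr v 1) • b 2
      + (b.repr u 0 * b.repr v 0 + b.repr u 1 * b.repr v 0) • b 3) (t : Fin 3 → ℂ) :
    cocycleOfInvariants b t ∈ Cocycles B := by
  intro x y z
  simp only [hm x y, hm y z, cocycleOfInvariants, LinearMap.mk₂_apply]
  simp
  left
  ring

variable [SMulCommClass ℂ B B] [IsScalarTower ℂ B B]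

lemma mul_eq_of_table (b : Basis (Fin 4) ℂ B)
    (h00 : b 0 * b 0 = b 3) (h01 : b 0 * b 1 = b 2) (h10 : b 1 * b 0 = b 3)
    (h : ∀ i j : Fin 4, ¬(i = 0 ∧ j = 0) → ¬(i = 0 ∧ j = 1) → ¬(i = 1 ∧ j = 0) →
      b i * b j = 0) (u v : B) :
    u * v = (b.repr u 0 * b.repr v 1) • b 2
      + (b.repr u 0 * b.repr v 0 + b.repr u 1 * b.repr v 0) • b 3 := by
  have h02 := h 0 2 (by decide) (by decide) (by decide)
  have h03 := h 0 3 (by decide) (by decide) (by decide)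
  have h11 := h 1 1 (by decide) (by decide) (by decide)
  have h12 := h 1 2 (by decide) (by decide) (by decide)
  have h13 := h 1 3 (by decide) (by decide) (by decide)
  have h2 : ∀ j, b 2 * b j = 0 := fun j => h 2 j (by simp) (by simp) (by simp)
  have h3 : ∀ j, b 3 * b j = 0 := fun j => h 3 j (by simp) (by simp) (by simp)
  conv_lhs => rw [← b.sum_repr u, ← b.sum_repr v]
  simp only [Fin.sum_univ_four, add_mul, mul_add, smul_mul_assoc, mul_smul_comm, h00, h01, h10,
    h02, h03, h11, h12, h13, h2, h3, smul_zero, add_zero]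
  module

/-- A cocycle with trivial invariants is the coboundary of the functional
`g = f₀₁ b₂* + f₀₀ b₃*`. -/
lemma mem_coboundaries_of_invariants_eq_zero (b : Basis (Fin 4) ℂ B)
    (h00 : b 0 * b 0 = b 3) (h01 : b 0 * b 1 = b 2) (h10 : b 1 * b 0 = b 3)
    (h : ∀ i j : Fin 4, ¬(i = 0 ∧ j = 0) → ¬(i = 0 ∧ j = 1) → ¬(i = 1 ∧ j = 0) →
      b i * b j = 0)
    {f : B →ₗ[ℂ] B →ₗ[ℂ] ℂ} (hf : f ∈ Cocycles B) (h0 : cocycleInvariants b f = 0) :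
    f ∈ Coboundaries B := by
  have hf' : ∀ i j k, f (b i * b j) (b k) = f (b i) (b j * b k) := fun i j k => hf _ _ _
  have e0 : f (b 0) (b 0) - f (b 1) (b 0) = 0 := congrFun h0 0
  have e1 : f (b 1) (b 1) = 0 := congrFun h0 1
  have e2 : f (b 3) (b 1) = 0 := congrFun h0 2
  have h02 := h 0 2 (by decide) (by decide) (by decide)
  have h03 := h 0 3 (by decide) (by decide) (by decide)
  have h11 := h 1 1 (by decide) (by decide) (by decide)
  have h12 := h 1 2 (by decide) (by decide) (by decide)
  have h13 := h 1 3 (by decide) (by decide) (by decide)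
  have h2 : ∀ j, b 2 * b j = 0 := fun j => h 2 j (by simp) (by simp) (by simp)
  have h3 : ∀ j, b 3 * b j = 0 := fun j => h 3 j (by simp) (by simp) (by simp)
  have f13 : f (b 1) (b 3) = 0 := by simpa [h11, h10] using (hf' 1 1 0).symm
  have f30 : f (b 3) (b 0) = 0 := by simpa [h10, h00, f13] using hf' 1 0 0
  have f03 : f (b 0) (b 3) = 0 := by simpa [h00, f30] using (hf' 0 0 0).symm
  have f20 : f (b 2) (b 0) = 0 := by simpa [h01, h10, f03] using hf' 0 1 0
  have f02 : f (b 0) (b 2) = 0 := by simpa [h00, h01, e2] using (hf' 0 0 1).symm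
  have f12 : f (b 1) (b 2) = 0 := by simpa [h10, h01, e2] using (hf' 1 0 1).symm
  have f21 : f (b 2) (b 1) = 0 := by simpa [h01, h11] using hf' 0 1 1
  have f22 : f (b 2) (b 2) = 0 := by simpa [h01, h12] using hf' 0 1 2
  have f23 : f (b 2) (b 3) = 0 := by simpa [h01, h13] using hf' 0 1 3
  have f32 : f (b 3) (b 2) = 0 := by simpa [h00, h02] using hf' 0 0 2
  have f33 : f (b 3) (b 3) = 0 := by simpa [h00, h03] using hf' 0 0 3
  have f10 : f (b 1) (b 0) = f (b 0) (b 0) := (sub_eq_zero.mp e0).symm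
  let g : B →ₗ[ℂ] ℂ := f (b 0) (b 1) • b.coord 2 + f (b 0) (b 0) • b.coord 3
  have key : f = (LinearMap.mul ℂ B).compr₂ g := by
    refine b.ext fun i => b.ext fun j => ?_
    fin_cases i <;> fin_cases j <;>
      simp [g, h00, h01, h10, h02, h03, h11, h12, h13, h2, h3, e1, e2, f13, f30, f03, f20, f02,
        f12, f21, f22, f23, f32, f33, f10]
  exact ⟨g, fun x y => by
    conv_lhs => rw [key]
    simp⟩

end Example

/-- For the 4-dimensional algebra `B` with basis `x, y, z, z'` and only nonzero products
`x·x = z'`, `x·y = z` and `y·x = z'` (below `b 0 = x`, `b 1 = y`, `b 2 = z`, `b 3 = z'`):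
`t(B) = 13`, i.e. `dim M(B) = 3`. -/
theorem tInv_example_thirteen (B : Type*) [NonUnitalRing B] [Module ℂ B] [SMulCommClass ℂ B B] [IsScalarTower ℂ B B]
    (h : ∃ b : Basis (Fin 4) ℂ B,
      b 0 * b 0 = b 3 ∧ b 0 * b 1 = b 2 ∧ b 1 * b 0 = b 3 ∧
      ∀ i j : Fin 4, ¬(i = 0 ∧ j = 0) → ¬(i = 0 ∧ j = 1) → ¬(i = 1 ∧ j = 0) →
        b i * b j = 0) :
    tInv B = 13 ∧ multDim B = 3 := by
  obtain ⟨b, h00, h01, h10, h⟩ := h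
  have hm := mul_eq_of_table b h00 h01 h10 h
  have hker : Coboundaries B ≤ LinearMap.ker (cocycleInvariants b) := by
    rintro f ⟨g, hg⟩
    have h11 := h 1 1 (by decide) (by decide) (by decide)
    have h31 := h 3 1 (by decide) (by decide) (by decide)
    ext i
    fin_cases i <;> simp [cocycleInvariants, hg, h00, h10, h11, h31]
  let φ : ((Cocycles B).map (Coboundaries B).mkQ) →ₗ[ℂ] (Fin 3 → ℂ) :=
    ((Coboundaries B).liftQ (cocycleInvariants b) hker).domRestrict _
  have hinj : Function.Injective φ := by
    rw [← LinearMap.ker_eq_bot, LinearMap.ker_eq_bot']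
    rintro ⟨_, f, hf, rfl⟩ h0
    have h0' : cocycleInvariants b f = 0 := by simpa [φ] using h0
    have := mem_coboundaries_of_invariants_eq_zero b h00 h01 h10 h hf h0'
    exact Subtype.ext ((Submodule.Quotient.mk_eq_zero _).mpr this)
  have hsurj : Function.Surjective φ := fun t =>
    ⟨⟨_, cocycleOfInvariants b t, cocycleOfInvariants_mem b hm t, rfl⟩, by
      simpa [φ] using cocycleInvariants_cocycleOfInvariants b t⟩
  have hM : multDim B = 3 := by
    unfold multDim
    rw [(LinearEquiv.ofBijective φ ⟨hinj, hsurj⟩).finrank_eq]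
    simp
  refine ⟨?_, hM⟩
  rw [tInv, hM, Module.finrank_eq_card_basis b]
  norm_num
end
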